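/- Let 𝒲 be a weakly exact structure on an additive category 𝒜. Then the class 𝓘 of admissible monics of 𝒲 is a right weakly exact structure on 𝒜, and the class 𝓓 of admissible epics of 𝒲 is a left weakly exact structure on 𝒜; moreover 𝒲 coincides with the class of kernel–cokernel pairs (i, d) with i ∈ 𝓘 and d ∈ 𝓓, so every weakly exact structure arises by gluing a right and a left weakly exact structure. -/

import Mathlib

open CategoryTheory CategoryTheory.Limits ZeroObject

universe w v u

namespace WeaklyExactPaper

section Preamble

variable {C : Type u} [Category.{v} C] [Preadditive C] [HasZeroObject C] [HasBinaryBiproducts C]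

/-- `(i, d)` is a kernel–cokernel pair: `i` is a kernel of `d` and `d` is a cokernel of `i`. -/
structure IsKernelCokernelPair {A B Z : C} (i : A ⟶ B) (d : B ⟶ Z) : Prop where
  w : i ≫ d = 0
  isKernel : Nonempty (IsLimit (KernelFork.ofι i w))
  isCokernel : Nonempty (IsColimit (CokernelCofork.ofπ d w))

/-- Isomorphism of composable pairs `(i, d) ≅ (i', d')`. -/
def PairIso {A B Z A' B' Z' : C} (i : A ⟶ B) (d : B ⟶ Z) (i' : A' ⟶ B') (d' : B' ⟶ Z') : Prop :=
  ∃ (eA : A ≅ A') (eB : B ≅ B') (eZ : Z ≅ Z'),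
    i ≫ eB.hom = eA.hom ≫ i' ∧ d ≫ eZ.hom = eB.hom ≫ d'

/-- `f` is a kernel of some morphism. -/
def IsSomeKernel {A B : C} (f : A ⟶ B) : Prop :=
  ∃ (Z : C) (g : B ⟶ Z) (w : f ≫ g = 0), Nonempty (IsLimit (KernelFork.ofι f w))

/-- `g` is a cokernel of some morphism. -/
def IsSomeCokernel {B Z : C} (g : B ⟶ Z) : Prop :=
  ∃ (A : C) (f : A ⟶ B) (w : f ≫ g = 0), Nonempty (IsColimit (CokernelCofork.ofπ g w))

/-- `f` admits a cokernel. -/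
def AdmitsCokernel {A B : C} (f : A ⟶ B) : Prop :=
  ∃ (Z : C) (g : B ⟶ Z) (w : f ≫ g = 0), Nonempty (IsColimit (CokernelCofork.ofπ g w))

/-- `g` admits a kernel. -/
def AdmitsKernel {B Z : C} (g : B ⟶ Z) : Prop :=
  ∃ (A : C) (f : A ⟶ B) (w : f ≫ g = 0), Nonempty (IsLimit (KernelFork.ofι f w))

/-- A weakly exact structure on an additive category: a class of kernel–cokernel pairs,
closed under isomorphisms of composable pairs and binary direct sums, containing the pairs
`(1_X, X ⟶ 0)` and `(0 ⟶ X, 1_X)`, and satisfying the pushout axiom (E2) and the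
pullback axiom (E2)ᵒᵖ. -/
structure WeaklyExactStructure (C : Type u) [Category.{v} C] [Preadditive C]
    [HasZeroObject C] [HasBinaryBiproducts C] where
  W : ∀ ⦃A B Z : C⦄, (A ⟶ B) → (B ⟶ Z) → Prop
  kc_of_mem : ∀ {A B Z : C} {i : A ⟶ B} {d : B ⟶ Z}, W i d → IsKernelCokernelPair i d
  iso_closed : ∀ {A B Z A' B' Z' : C} {i : A ⟶ B} {d : B ⟶ Z} {i' : A' ⟶ B'} {d' : B' ⟶ Z'},
    W i d → PairIso i d i' d' → W i' d'
  sum_mem : ∀ {A₁ B₁ Z₁ A₂ B₂ Z₂ : C} {i₁ : A₁ ⟶ B₁} {d₁ : B₁ ⟶ Z₁} {i₂ : A₂ ⟶ B₂}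
    {d₂ : B₂ ⟶ Z₂}, W i₁ d₁ → W i₂ d₂ → W (biprod.map i₁ i₂) (biprod.map d₁ d₂)
  id_zero_mem : ∀ X : C, W (𝟙 X) (0 : X ⟶ (0 : C))
  zero_id_mem : ∀ X : C, W (0 : (0 : C) ⟶ X) (𝟙 X)
  pushout_mem : ∀ {A B Z A' : C} {i : A ⟶ B} {d : B ⟶ Z}, W i d → ∀ t : A ⟶ A',
    ∃ (S : C) (g : B ⟶ S) (i' : A' ⟶ S), IsPushout i t g i' ∧ ∃ (Z' : C) (d' : S ⟶ Z'), W i' d'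
  pullback_mem : ∀ {A B Z D : C} {i : A ⟶ B} {d : B ⟶ Z}, W i d → ∀ t : D ⟶ Z,
    ∃ (P : C) (p : P ⟶ B) (q : P ⟶ D), IsPullback p q d t ∧ ∃ (A'' : C) (i'' : A'' ⟶ P), W i'' q

/-- `i` is an admissible monic of `𝒲`. -/
def AdmissibleMonic (𝒲 : WeaklyExactStructure C) {A B : C} (i : A ⟶ B) : Prop :=
  ∃ (Z : C) (d : B ⟶ Z), 𝒲.W i d

/-- `d` is an admissible epic of `𝒲`. -/
def AdmissibleEpic (𝒲 : WeaklyExactStructure C) {B Z : C} (d : B ⟶ Z) : Prop :=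
  ∃ (A : C) (i : A ⟶ B), 𝒲.W i d

/-- `(i, d)` is a split kernel–cokernel pair. -/
def IsSplitPair {A B Z : C} (i : A ⟶ B) (d : B ⟶ Z) : Prop :=
  ∃ (X Y : C), PairIso (biprod.inl : X ⟶ X ⊞ Y) (biprod.snd : X ⊞ Y ⟶ Y) i d

end Preamble

section OneSided

variable {C : Type u} [Category.{v} C] [Preadditive C] [HasZeroObject C] [HasBinaryBiproducts C]

/-- A right weakly exact structure: a class of kernels closed under isomorphisms, containing
identities and zero monomorphisms `0 ⟶ X`, closed under pushouts (P), satisfying the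
cancellation axiom (Q) and closed under direct sums (S). -/
structure RightWeaklyExactStructure (C : Type u) [Category.{v} C] [Preadditive C]
    [HasZeroObject C] [HasBinaryBiproducts C] where
  I : ∀ ⦃A B : C⦄, (A ⟶ B) → Prop
  ker_of_mem : ∀ {A B : C} {f : A ⟶ B}, I f → IsSomeKernel f
  iso_closed : ∀ {A B A' B' : C} {f : A ⟶ B} {f' : A' ⟶ B'} (eA : A ≅ A') (eB : B ≅ B'),
    f ≫ eB.hom = eA.hom ≫ f' → I f → I f'
  id_mem : ∀ X : C, I (𝟙 X)
  zero_mem : ∀ X : C, I (0 : (0 : C) ⟶ X)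
  pushout_mem : ∀ {X Y X' : C} {f : X ⟶ Y}, I f → ∀ h : X ⟶ X',
    ∃ (Y' : C) (h' : Y ⟶ Y') (f' : X' ⟶ Y'), IsPushout f h h' f' ∧ I f'
  cancel_mem : ∀ {A B Z : C} (a : A ⟶ B) (b : B ⟶ Z), I (a ≫ b) → AdmitsCokernel a → I a
  sum_mem : ∀ {A B A' B' : C} {f : A ⟶ B} {f' : A' ⟶ B'}, I f → I f' → I (biprod.map f f')

/-- A left weakly exact structure: a class of cokernels closed under isomorphisms, containing
identities and zero epimorphisms `X ⟶ 0`, closed under pullbacks (Pᵒᵖ), satisfying the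
cancellation axiom (Qᵒᵖ) and closed under direct sums (Sᵒᵖ). -/
structure LeftWeaklyExactStructure (C : Type u) [Category.{v} C] [Preadditive C]
    [HasZeroObject C] [HasBinaryBiproducts C] where
  D : ∀ ⦃B Z : C⦄, (B ⟶ Z) → Prop
  coker_of_mem : ∀ {B Z : C} {g : B ⟶ Z}, D g → IsSomeCokernel g
  iso_closed : ∀ {B Z B' Z' : C} {g : B ⟶ Z} {g' : B' ⟶ Z'} (eB : B ≅ B') (eZ : Z ≅ Z'),
    g ≫ eZ.hom = eB.hom ≫ g' → D g → D g'
  id_mem : ∀ X : C, D (𝟙 X)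
  zero_mem : ∀ X : C, D (0 : X ⟶ (0 : C))
  pullback_mem : ∀ {B Z E : C} {f : B ⟶ Z}, D f → ∀ h : E ⟶ Z,
    ∃ (P : C) (p : P ⟶ B) (e : P ⟶ E), IsPullback p e f h ∧ D e
  cancel_mem : ∀ {A B Z : C} (a : A ⟶ B) (b : B ⟶ Z), D (a ≫ b) → AdmitsKernel b → D b
  sum_mem : ∀ {B Z B' Z' : C} {g : B ⟶ Z} {g' : B' ⟶ Z'}, D g → D g' → D (biprod.map g g')

end OneSided

section Helpers

variable {C : Type u} [Category.{v} C] [Preadditive C] [HasZeroObject C] [HasBinaryBiproducts C]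

lemma kc_mono {A B Z : C} {i : A ⟶ B} {d : B ⟶ Z} (h : IsKernelCokernelPair i d) : Mono i := by
  obtain ⟨l⟩ := h.isKernel
  exact ⟨fun x y e => Fork.IsLimit.hom_ext l e⟩

lemma kc_epi {A B Z : C} {i : A ⟶ B} {d : B ⟶ Z} (h : IsKernelCokernelPair i d) : Epi d := by
  obtain ⟨l⟩ := h.isCokernel
  exact ⟨fun x y e => Cofork.IsColimit.hom_ext l e⟩

lemma kc_lift {A B Z T : C} {i : A ⟶ B} {d : B ⟶ Z} (h : IsKernelCokernelPair i d)
    (x : T ⟶ B) (hx : x ≫ d = 0) : ∃ u : T ⟶ A, u ≫ i = x := by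
  obtain ⟨l⟩ := h.isKernel
  obtain ⟨u, hu⟩ := KernelFork.IsLimit.lift' l x hx
  exact ⟨u, hu⟩

lemma kc_desc {A B Z T : C} {i : A ⟶ B} {d : B ⟶ Z} (h : IsKernelCokernelPair i d)
    (x : B ⟶ T) (hx : i ≫ x = 0) : ∃ u : Z ⟶ T, d ≫ u = x := by
  obtain ⟨l⟩ := h.isCokernel
  obtain ⟨u, hu⟩ := CokernelCofork.IsColimit.desc' l x hx
  exact ⟨u, hu⟩

/-- replace the kernel -/
lemma W_of_kernel (𝒲 : WeaklyExactStructure C) {A A' B Z : C} {k : A ⟶ B} {d : B ⟶ Z}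
    (h : 𝒲.W k d) (i : A' ⟶ B) [Mono i] (w : i ≫ d = 0)
    (hi : ∃ u : A ⟶ A', u ≫ i = k) : 𝒲.W i d := by
  have hk := 𝒲.kc_of_mem h
  have := kc_mono hk
  obtain ⟨u, hu⟩ := hi
  obtain ⟨v, hv⟩ := kc_lift hk i w
  refine 𝒲.iso_closed h ⟨⟨u, v, ?_, ?_⟩, Iso.refl _, Iso.refl _, by simp [hu], by simp⟩
  · rw [← cancel_mono k]; simp [hu, hv]
  · rw [← cancel_mono i]; simp [hu, hv]

/-- replace the cokernel -/
lemma W_of_cokernel (𝒲 : WeaklyExactStructure C) {A B Z Z' : C} {i : A ⟶ B} {k : B ⟶ Z}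
    (h : 𝒲.W i k) (d : B ⟶ Z') [Epi d] (w : i ≫ d = 0)
    (hd : ∃ u : Z' ⟶ Z, d ≫ u = k) : 𝒲.W i d := by
  have hk := 𝒲.kc_of_mem h
  have := kc_epi hk
  obtain ⟨u, hu⟩ := hd
  obtain ⟨v, hv⟩ := kc_desc hk d w
  refine 𝒲.iso_closed h ⟨Iso.refl _, Iso.refl _, ⟨v, u, ?_, ?_⟩, by simp, by simp [hv]⟩
  · rw [← cancel_epi k]; simp [reassoc_of% hv, hu]
  · rw [← cancel_epi d]; simp [reassoc_of% hu, hv]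

lemma monic_iso (𝒲 : WeaklyExactStructure C) {A B A' B' : C} {f : A ⟶ B} {f' : A' ⟶ B'}
    (eA : A ≅ A') (eB : B ≅ B') (e : f ≫ eB.hom = eA.hom ≫ f')
    (h : AdmissibleMonic 𝒲 f) : AdmissibleMonic 𝒲 f' := by
  obtain ⟨Z, d, h⟩ := h
  exact ⟨Z, eB.inv ≫ d, 𝒲.iso_closed h ⟨eA, eB, Iso.refl _, e, by simp⟩⟩

lemma epic_iso (𝒲 : WeaklyExactStructure C) {B Z B' Z' : C} {f : B ⟶ Z} {f' : B' ⟶ Z'}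
    (eB : B ≅ B') (eZ : Z ≅ Z') (e : f ≫ eZ.hom = eB.hom ≫ f')
    (h : AdmissibleEpic 𝒲 f) : AdmissibleEpic 𝒲 f' := by
  obtain ⟨A, i, h⟩ := h
  exact ⟨A, i ≫ eB.hom, 𝒲.iso_closed h ⟨Iso.refl _, eB, eZ, by simp, e⟩⟩

lemma epic_pullback (𝒲 : WeaklyExactStructure C) {P B Z D : C} {p : P ⟶ B} {q : P ⟶ D}
    {d : B ⟶ Z} {t : D ⟶ Z} (sq : IsPullback p q d t) (h : AdmissibleEpic 𝒲 d) :
    AdmissibleEpic 𝒲 q := by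
  obtain ⟨A, i, h⟩ := h
  obtain ⟨P', p', q', sq', h'⟩ := 𝒲.pullback_mem h t
  exact epic_iso 𝒲 (sq'.isoIsPullback _ _ sq) (Iso.refl _) (by simp) h'

lemma monic_pushout (𝒲 : WeaklyExactStructure C) {A B A' S : C} {i : A ⟶ B} {t : A ⟶ A'}
    {g : B ⟶ S} {i' : A' ⟶ S} (sq : IsPushout i t g i') (h : AdmissibleMonic 𝒲 i) :
    AdmissibleMonic 𝒲 i' := by
  obtain ⟨Z, d, h⟩ := h
  obtain ⟨S', g', j', sq', h'⟩ := 𝒲.pushout_mem h t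
  exact monic_iso 𝒲 (Iso.refl _) (sq'.isoIsPushout _ _ sq) (by simp) h'

lemma mk_pullback {P X Y Z : C} {p : P ⟶ X} {q : P ⟶ Y} {f : X ⟶ Z} {g : Y ⟶ Z}
    (w : p ≫ f = q ≫ g)
    (inj : ∀ {T : C} (x : T ⟶ P), x ≫ p = 0 → x ≫ q = 0 → x = 0)
    (ex : ∀ {T : C} (x : T ⟶ X) (y : T ⟶ Y), x ≫ f = y ≫ g → ∃ u : T ⟶ P, u ≫ p = x ∧ u ≫ q = y) :
    IsPullback p q f g := by
  refine ⟨⟨w⟩, ⟨PullbackCone.IsLimit.mk w (fun s => (ex s.fst s.snd s.condition).choose)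
    (fun s => (ex s.fst s.snd s.condition).choose_spec.1)
    (fun s => (ex s.fst s.snd s.condition).choose_spec.2) ?_⟩⟩
  intro s m h1 h2
  have h := (ex s.fst s.snd s.condition).choose_spec
  rw [← sub_eq_zero]
  exact inj _ (by rw [Preadditive.sub_comp, h1, h.1, sub_self])
    (by rw [Preadditive.sub_comp, h2, h.2, sub_self])

lemma mk_pushout {P X Y Z : C} {p : X ⟶ P} {q : Y ⟶ P} {f : Z ⟶ X} {g : Z ⟶ Y}
    (w : f ≫ p = g ≫ q)
    (inj : ∀ {T : C} (x : P ⟶ T), p ≫ x = 0 → q ≫ x = 0 → x = 0)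
    (ex : ∀ {T : C} (x : X ⟶ T) (y : Y ⟶ T), f ≫ x = g ≫ y → ∃ u : P ⟶ T, p ≫ u = x ∧ q ≫ u = y) :
    IsPushout f g p q := by
  refine ⟨⟨w⟩, ⟨PushoutCocone.IsColimit.mk w (fun s => (ex s.inl s.inr s.condition).choose)
    (fun s => (ex s.inl s.inr s.condition).choose_spec.1)
    (fun s => (ex s.inl s.inr s.condition).choose_spec.2) ?_⟩⟩
  intro s m h1 h2
  have h := (ex s.inl s.inr s.condition).choose_spec
  rw [← sub_eq_zero]
  exact inj _ (by rw [Preadditive.comp_sub, h1, h.1, sub_self])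
    (by rw [Preadditive.comp_sub, h2, h.2, sub_self])

lemma monic_cancel (𝒲 : WeaklyExactStructure C) {A B Z : C} (a : A ⟶ B) (b : B ⟶ Z)
    (h : AdmissibleMonic 𝒲 (a ≫ b)) (hc : AdmitsCokernel a) : AdmissibleMonic 𝒲 a := by
  obtain ⟨E, d, h⟩ := h
  obtain ⟨F, c, wc, ⟨lc⟩⟩ := hc
  have : Epi c := ⟨fun x y e => Cofork.IsColimit.hom_ext lc e⟩
  have kd := 𝒲.kc_of_mem h
  have := kc_mono kd
  have : Mono a := mono_of_mono a b
  have := kc_epi kd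
  obtain ⟨S, g, i', sq, E', d', h'⟩ := 𝒲.pushout_mem h a
  have kd' := 𝒲.kc_of_mem h'
  have := kc_mono kd'
  have := kc_epi kd'
  -- g ≫ d' is a cokernel of a ≫ b
  have hW : 𝒲.W (a ≫ b) (g ≫ d') := by
    have : Epi (g ≫ d') := by
      rw [Preadditive.epi_iff_cancel_zero]
      intro T v hv
      rw [Category.assoc] at hv
      have : d' ≫ v = 0 := sq.hom_ext (by simpa using hv) (by simp [reassoc_of% kd'.w])
      rwa [← cancel_epi d', comp_zero]
    refine W_of_cokernel 𝒲 h _ (by rw [← Category.assoc, sq.w, Category.assoc, kd'.w, comp_zero]) ?_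
    obtain ⟨v, hv⟩ := kc_desc kd' (sq.desc d 0 (by simpa using kd.w)) (by simp)
    exact ⟨v, by rw [Category.assoc, hv]; simp⟩
  have e1 : AdmissibleEpic 𝒲 (biprod.desc i' g) := by
    refine epic_pullback 𝒲 (p := biprod.snd) (d := g ≫ d') (t := d') ?_ ⟨_, _, hW⟩
    refine mk_pullback ?_ ?_ ?_
    · ext <;> simp [kd'.w]
    · intro T x h1 h2
      have : (x ≫ biprod.fst) ≫ i' = 0 := by
        rw [biprod.desc_eq, Preadditive.comp_add, reassoc_of% h1] at h2
        simpa using h2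
      have h3 : x ≫ biprod.fst = 0 := by rwa [← cancel_mono i', zero_comp]
      ext
      · simpa using h3
      · simpa using h1
    · intro T x y hxy
      obtain ⟨u, hu⟩ := kc_lift kd' (y - x ≫ g) (by simp [← hxy])
      exact ⟨biprod.lift u x, by simp, by simp [hu]⟩
  obtain ⟨s, hs⟩ : ∃ s : F ⟶ S, c ≫ s = i' - b ≫ g := by
    obtain ⟨s, hs⟩ := CokernelCofork.IsColimit.desc' lc (i' - b ≫ g) (by
      have := sq.w
      simp only [Category.assoc] at this
      simp [this])
    exact ⟨s, hs⟩
  obtain ⟨r, hr1, hr2⟩ : ∃ r : S ⟶ Z, g ≫ r = 𝟙 _ ∧ i' ≫ r = b :=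
    ⟨sq.desc (𝟙 _) b (by simp), by simp, by simp⟩
  obtain ⟨ρ, hρ1, hρ2⟩ : ∃ r : S ⟶ F, g ≫ r = 0 ∧ i' ≫ r = c :=
    ⟨sq.desc 0 c (by simpa using wc.symm), by simp, by simp⟩
  have hsr : s ≫ r = 0 := by
    rw [← cancel_epi c, reassoc_of% hs]; simp [hr1, hr2]
  have hsρ : s ≫ ρ = 𝟙 _ := by
    rw [← cancel_epi c, reassoc_of% hs]; simp [hρ1, hρ2]
  have e2 : AdmissibleEpic 𝒲 c := by
    refine epic_pullback 𝒲 (p := biprod.lift (𝟙 B) (-b)) (d := biprod.desc i' g) (t := s) ?_ e1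
    refine mk_pullback ?_ ?_ ?_
    · simp [hs, sub_eq_add_neg]
    · intro T x h1 h2
      simpa using h1 =≫ biprod.fst
    · intro T x f hxf
      have h1 : x ≫ biprod.snd = - (x ≫ biprod.fst ≫ b) := by
        have := hxf =≫ r
        simp only [biprod.desc_eq, Preadditive.comp_add, Preadditive.add_comp, Category.assoc,
          hr1, hr2, hsr, comp_zero, Category.comp_id] at this
        exact eq_neg_of_add_eq_zero_right this
      refine ⟨x ≫ biprod.fst, ?_, ?_⟩
      · ext
        · simp
        · simp [h1]
      · have := hxf =≫ ρ
        simpa [biprod.desc_eq, hρ1, hρ2, hsρ] using this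
  obtain ⟨K, k, hk⟩ := e2
  have kk := 𝒲.kc_of_mem hk
  refine ⟨F, c, W_of_kernel 𝒲 hk a wc ?_⟩
  have h1 : k ≫ i' = k ≫ b ≫ g := by
    have := k ≫= hs
    rw [reassoc_of% kk.w, zero_comp, Preadditive.comp_sub] at this
    exact (sub_eq_zero.1 this.symm)
  obtain ⟨u, hu⟩ := kc_lift (𝒲.kc_of_mem hW) (k ≫ b) (by
    have := h1 =≫ d'
    simp only [Category.assoc, kd'.w, comp_zero] at this
    simpa using this.symm)
  refine ⟨u, ?_⟩
  rw [← cancel_mono i', h1, ← Category.assoc k, ← hu]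
  simp only [Category.assoc]
  have := sq.w
  simp only [Category.assoc] at this
  rw [this]

lemma epic_cancel (𝒲 : WeaklyExactStructure C) {A B Z : C} (b : Z ⟶ B) (a : B ⟶ A)
    (h : AdmissibleEpic 𝒲 (b ≫ a)) (hc : AdmitsKernel a) : AdmissibleEpic 𝒲 a := by
  obtain ⟨E, d, h⟩ := h
  obtain ⟨F, c, wc, ⟨lc⟩⟩ := hc
  have : Mono c := ⟨fun x y e => Fork.IsLimit.hom_ext lc e⟩
  have kd := 𝒲.kc_of_mem h
  have := kc_epi kd
  have : Epi a := epi_of_epi b a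
  have := kc_mono kd
  obtain ⟨S, g, i', sq, E', d', h'⟩ := 𝒲.pullback_mem h a
  have kd' := 𝒲.kc_of_mem h'
  have := kc_epi kd'
  have := kc_mono kd'
  have hW : 𝒲.W (d' ≫ g) (b ≫ a) := by
    have : Mono (d' ≫ g) := by
      rw [Preadditive.mono_iff_cancel_zero]
      intro T v hv
      have : v ≫ d' = 0 := sq.hom_ext (by simpa using hv) (by simp [kd'.w])
      rwa [← cancel_mono d', zero_comp]
    refine W_of_kernel 𝒲 h _ (by rw [Category.assoc, sq.w, reassoc_of% kd'.w, zero_comp]) ?_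
    obtain ⟨v, hv⟩ := kc_lift kd' (sq.lift d 0 (by simpa using kd.w)) (by simp)
    exact ⟨v, by rw [reassoc_of% hv]; simp⟩
  have e1 : AdmissibleMonic 𝒲 (biprod.lift i' g) := by
    refine monic_pushout 𝒲 (g := biprod.inr) (i := d' ≫ g) (t := d') ?_ ⟨_, _, hW⟩
    refine mk_pushout ?_ ?_ ?_
    · ext <;> simp [kd'.w]
    · intro T x h1 h2
      have : i' ≫ (biprod.inl ≫ x) = 0 := by
        rw [biprod.lift_eq, Preadditive.add_comp, Category.assoc, Category.assoc, h1] at h2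
        simpa using h2
      have h3 : biprod.inl ≫ x = 0 := by rwa [← cancel_epi i', comp_zero]
      ext
      · simpa using h3
      · simpa using h1
    · intro T x y hxy
      obtain ⟨u, hu⟩ := kc_desc kd' (y - g ≫ x) (by
        rw [Category.assoc] at hxy
        simp [← hxy])
      exact ⟨biprod.desc u x, by simp, by simp [hu]⟩
  have sqw := sq.w
  obtain ⟨s, hs⟩ : ∃ s : S ⟶ F, s ≫ c = i' - g ≫ b := by
    obtain ⟨s, hs⟩ := KernelFork.IsLimit.lift' lc (i' - g ≫ b) (by
      simp [sqw])
    exact ⟨s, hs⟩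
  obtain ⟨r, hr1, hr2⟩ : ∃ r : Z ⟶ S, r ≫ g = 𝟙 _ ∧ r ≫ i' = b :=
    ⟨sq.lift (𝟙 _) b (by simp), by simp, by simp⟩
  obtain ⟨ρ, hρ1, hρ2⟩ : ∃ r : F ⟶ S, r ≫ g = 0 ∧ r ≫ i' = c :=
    ⟨sq.lift 0 c (by simpa using wc.symm), by simp, by simp⟩
  have hsr : r ≫ s = 0 := by
    rw [← cancel_mono c, Category.assoc, hs]; simp [reassoc_of% hr1, hr2]
  have hsρ : ρ ≫ s = 𝟙 _ := by
    rw [← cancel_mono c, Category.assoc, hs]; simp [reassoc_of% hρ1, hρ2]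
  have e2 : AdmissibleMonic 𝒲 c := by
    refine monic_pushout 𝒲 (g := biprod.desc (𝟙 B) (-b)) (i := biprod.lift i' g) (t := s) ?_ e1
    refine mk_pushout ?_ ?_ ?_
    · simp [hs, sub_eq_add_neg]
    · intro T x h1 h2
      simpa using biprod.inl ≫= h1
    · intro T x f hxf
      have h1 : biprod.inr ≫ x = - (b ≫ biprod.inl ≫ x) := by
        have := r ≫= hxf
        simp only [biprod.lift_eq, Preadditive.comp_add, Preadditive.add_comp, Category.assoc,
          reassoc_of% hr1, reassoc_of% hr2, reassoc_of% hsr, zero_comp] at this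
        exact eq_neg_of_add_eq_zero_right this
      refine ⟨biprod.inl ≫ x, ?_, ?_⟩
      · ext
        · simp
        · simp [h1]
      · have := ρ ≫= hxf
        simpa [biprod.lift_eq, reassoc_of% hρ1, reassoc_of% hρ2, reassoc_of% hsρ] using this
  obtain ⟨K, k, hk⟩ := e2
  have kk := 𝒲.kc_of_mem hk
  refine ⟨F, c, W_of_cokernel 𝒲 hk a wc ?_⟩
  have h1 : i' ≫ k = g ≫ b ≫ k := by
    have := hs =≫ k
    rw [Category.assoc, kk.w, comp_zero, Preadditive.sub_comp, Category.assoc] at this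
    exact (sub_eq_zero.1 this.symm)
  obtain ⟨u, hu⟩ := kc_desc (𝒲.kc_of_mem hW) (b ≫ k) (by
    rw [Category.assoc, ← h1, reassoc_of% kd'.w, zero_comp])
  refine ⟨u, ?_⟩
  rw [← cancel_epi i', h1, ← hu]
  simp only [Category.assoc]
  rw [reassoc_of% sqw]

end Helpers

section Statement

variable {C : Type u} [Category.{v} C] [Preadditive C] [HasZeroObject C] [HasBinaryBiproducts C]

/-- The admissible monics of a weakly exact structure form a right weakly exact structure,
its admissible epics form a left weakly exact structure, and the weakly exact structure is
obtained by gluing the two. -/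
theorem statement6 (𝒲 : WeaklyExactStructure C) :
    ∃ (ℛ : RightWeaklyExactStructure C) (ℒ : LeftWeaklyExactStructure C),
      (∀ {A B : C} (i : A ⟶ B), ℛ.I i ↔ AdmissibleMonic 𝒲 i) ∧
      (∀ {B Z : C} (d : B ⟶ Z), ℒ.D d ↔ AdmissibleEpic 𝒲 d) ∧
      (∀ {A B Z : C} (i : A ⟶ B) (d : B ⟶ Z),
        𝒲.W i d ↔ (IsKernelCokernelPair i d ∧ ℛ.I i ∧ ℒ.D d)) := by
  refine ⟨⟨fun _ _ f => AdmissibleMonic 𝒲 f, ?_, fun eA eB e h => monic_iso 𝒲 eA eB e h,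
      fun X => ⟨_, _, 𝒲.id_zero_mem X⟩, fun X => ⟨_, _, 𝒲.zero_id_mem X⟩, ?_,
      fun a b h hc => monic_cancel 𝒲 a b h hc, ?_⟩,
    ⟨fun _ _ f => AdmissibleEpic 𝒲 f, ?_, fun eA eB e h => epic_iso 𝒲 eA eB e h,
      fun X => ⟨_, _, 𝒲.zero_id_mem X⟩, fun X => ⟨_, _, 𝒲.id_zero_mem X⟩, ?_,
      fun a b h hc => epic_cancel 𝒲 a b h hc, ?_⟩, fun _ => Iff.rfl, fun _ => Iff.rfl, ?_⟩
  · rintro A B f ⟨Z, d, h⟩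
    exact ⟨Z, d, (𝒲.kc_of_mem h).w, (𝒲.kc_of_mem h).isKernel⟩
  · rintro X Y X' f ⟨Z, d, h⟩ t
    exact 𝒲.pushout_mem h t
  · rintro A B A' B' f f' ⟨Z, d, h⟩ ⟨Z', d', h'⟩
    exact ⟨_, _, 𝒲.sum_mem h h'⟩
  · rintro A B f ⟨Z, d, h⟩
    exact ⟨Z, d, (𝒲.kc_of_mem h).w, (𝒲.kc_of_mem h).isCokernel⟩
  · rintro X Y X' f ⟨Z, d, h⟩ t
    exact 𝒲.pullback_mem h t
  · rintro A B A' B' f f' ⟨Z, d, h⟩ ⟨Z', d', h'⟩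
    exact ⟨_, _, 𝒲.sum_mem h h'⟩
  · intro A B Z i d
    refine ⟨fun h => ⟨𝒲.kc_of_mem h, ⟨_, _, h⟩, ⟨_, _, h⟩⟩, ?_⟩
    rintro ⟨hk, ⟨Z', d', h⟩, -⟩
    have := kc_epi hk
    exact W_of_cokernel 𝒲 h d hk.w (kc_desc hk d' (𝒲.kc_of_mem h).w)

end Statement

end WeaklyExactPaper
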